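/- arXiv:math/0507470 — 3 statements merged into one kernel-verified Lean document; each statement's English description precedes it below -/
import Mathlib

section
/- For natural numbers p < m, the polynomial obtained by applying the operator x·(d/dx) exactly p times to (1-x)^m in ℚ[x] is divisible by (1-x); equivalently, its value at x = 1 is 0. -/
open Polynomial

lemma aux_iter_dvd (p k : ℕ) (h : Polynomial ℚ) (hd : (1 - X : Polynomial ℚ) ^ (k + p) ∣ h) :
    (1 - X : Polynomial ℚ) ^ k ∣ (fun h : Polynomial ℚ => X * derivative h)^[p] h := by
  induction p generalizing h with
  | zero => simpa using hd
  | succ p ih =>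
    rw [Function.iterate_succ_apply]
    apply ih
    obtain ⟨g, rfl⟩ := hd
    rw [← add_assoc, derivative_mul, derivative_pow_succ, pow_succ]
    apply Dvd.dvd.mul_left
    apply dvd_add
    · exact Dvd.dvd.mul_right (Dvd.dvd.mul_right (Dvd.dvd.mul_left dvd_rfl _) _) _
    · exact Dvd.dvd.mul_right (Dvd.dvd.mul_right dvd_rfl _) _

/-- For natural numbers `p < m`, the polynomial obtained by applying the operator
`x·(d/dx)` exactly `p` times to `(1-x)^m` in `ℚ[x]` is divisible by `1 - x`;
equivalently, its value at `x = 1` is `0`. -/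
theorem x_dx_iterate_one_sub_X_pow_dvd (m p : ℕ) (hpm : p < m) :
    (1 - X : Polynomial ℚ) ∣
        (fun h : Polynomial ℚ => X * derivative h)^[p] ((1 - X : Polynomial ℚ) ^ m) ∧
      ((fun h : Polynomial ℚ => X * derivative h)^[p] ((1 - X : Polynomial ℚ) ^ m)).eval 1 = 0 := by
  have key : (1 - X : Polynomial ℚ) ∣
      (fun h : Polynomial ℚ => X * derivative h)^[p] ((1 - X : Polynomial ℚ) ^ m) := by
    have := aux_iter_dvd p 1 ((1 - X : Polynomial ℚ) ^ m) (pow_dvd_pow _ (by omega))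
    rwa [pow_one] at this
  refine ⟨key, ?_⟩
  obtain ⟨g, hg⟩ := key
  rw [hg]
  simp
end

section
/- For every natural number m, the polynomial obtained by applying the operator x·(d/dx) exactly m times to (1-x)^m in ℚ[x] takes the value (-1)^m · m! at x = 1. -/
open Polynomial

theorem x_dx_aux (m : ℕ) : ∀ g : Polynomial ℚ,
    ((fun h : Polynomial ℚ => X * derivative h)^[m] ((1 - X : Polynomial ℚ) ^ m * g)).eval 1 =
      (-1 : ℚ) ^ m * (Nat.factorial m : ℚ) * g.eval 1 := by
  induction m with
  | zero => intro g; simp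
  | succ k ih =>
    intro g
    rw [Function.iterate_succ_apply]
    have h : X * derivative ((1 - X : Polynomial ℚ) ^ (k + 1) * g) =
        (1 - X) ^ k * (-(C ((k : ℚ) + 1)) * X * g + (1 - X) * X * derivative g) := by
      rw [derivative_mul, derivative_pow]
      simp
      ring
    simp only [h]
    rw [ih]
    simp [Nat.factorial_succ]
    ring

/-- For every natural number `m`, the polynomial obtained by applying the operator
`x·(d/dx)` exactly `m` times to `(1-x)^m` in `ℚ[x]` takes the value `(-1)^m · m!`
at `x = 1`. -/
theorem x_dx_iterate_one_sub_X_pow_eval_one (m : ℕ) :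
    ((fun h : Polynomial ℚ => X * derivative h)^[m] ((1 - X : Polynomial ℚ) ^ m)).eval 1 =
      (-1 : ℚ) ^ m * (Nat.factorial m : ℚ) := by
  simpa using x_dx_aux m 1
end

section
/- For every natural number i ≥ 1 and every natural number n, there exists a polynomial P with rational coefficients of degree strictly less than i such that for all natural numbers s with 0 ≤ s ≤ n: ∑_{k=1}^{s} k^i + (-1)^i · ∑_{k=1}^{n-s} k^i = (n+1)·s^i + P(s). -/
open Polynomial

lemma aux_sum (i : ℕ) (hi : 1 ≤ i) (s m : ℕ) :
    (∑ k ∈ Finset.Icc 1 s, (k : ℚ) ^ i) +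
      (-1 : ℚ) ^ i * (∑ k ∈ Finset.Icc 1 m, (k : ℚ) ^ i) =
    ∑ j ∈ Finset.range (s + m + 1), ((s : ℚ) - j) ^ i := by
  induction m with
  | zero =>
    induction s with
    | zero => simp [Nat.one_le_iff_ne_zero.mp hi]
    | succ s ih =>
      simp only [add_zero] at ih ⊢
      rw [Finset.sum_range_succ', Finset.sum_Icc_succ_top (by omega)]
      have h : ∑ k ∈ Finset.range (s + 1), (((s + 1 : ℕ) : ℚ) - ((k + 1 : ℕ) : ℚ)) ^ i
          = ∑ k ∈ Finset.range (s + 1), ((s : ℚ) - k) ^ i := by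
        refine Finset.sum_congr rfl fun k _ => ?_
        push_cast
        ring
      rw [h, ← ih]
      push_cast
      ring
  | succ m ih =>
    rw [← add_assoc, Finset.sum_range_succ, ← ih, Finset.sum_Icc_succ_top (by omega),
      mul_add, ← mul_pow, ← add_assoc]
    congr 2
    push_cast
    ring


/-- For every natural number `i ≥ 1` and every natural number `n`, there exists a
polynomial `P` with rational coefficients of degree strictly less than `i` such that
for all natural numbers `s ≤ n`:
`∑_{k=1}^{s} k^i + (-1)^i · ∑_{k=1}^{n-s} k^i = (n+1)·s^i + P(s)`. -/
theorem exists_poly_sum_pow_add_neg_sum_pow (i n : ℕ) (hi : 1 ≤ i) :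
    ∃ P : Polynomial ℚ, P.degree < (i : ℕ) ∧
      ∀ s : ℕ, s ≤ n →
        (∑ k ∈ Finset.Icc 1 s, (k : ℚ) ^ i) +
            (-1 : ℚ) ^ i * (∑ k ∈ Finset.Icc 1 (n - s), (k : ℚ) ^ i) =
          ((n : ℚ) + 1) * (s : ℚ) ^ i + P.eval (s : ℚ) := by
  refine ⟨∑ j ∈ Finset.range (n + 1), ((X - C (j : ℚ)) ^ i - X ^ i), ?_, ?_⟩
  · rw [← Polynomial.mem_degreeLT]
    refine Submodule.sum_mem _ fun j _ => ?_
    rw [Polynomial.mem_degreeLT]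
    have hm : ((X - C (j : ℚ)) ^ i).Monic := (monic_X_sub_C _).pow i
    have hd : ((X - C (j : ℚ)) ^ i).degree = (i : WithBot ℕ) := by
      rw [degree_pow, degree_X_sub_C]; simp
    have h := degree_sub_lt_left (p := (X - C (j : ℚ)) ^ i) (q := X ^ i)
      (by rw [hd, degree_X_pow]) hm.ne_zero (by rw [hm.leadingCoeff, leadingCoeff_X_pow])
    rwa [hd] at h
  · intro s hs
    have h := aux_sum i hi s (n - s)
    rw [Nat.add_sub_cancel' hs] at h
    rw [h, eval_finsetSum]
    simp [Finset.sum_sub_distrib]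
end
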